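/- arXiv:1401.3636 — 2 statements merged into one kernel-verified Lean document; each statement's English description precedes it below -/
import Mathlib

section
/- Let x be a real number and let a, d be complex numbers with d ≠ 0, a + 1/2 ≠ 0, such that a/2, (a+1)/2 shifted denominators a+1/2, a+1, a+3/2 and d are not nonpositive integers or zero. Then e^{x²/4} · Σ_{k=0}^∞ (a/2)_k ((a+1)/2)_k (d+1)_k (−x²)^k / ((a+1/2)_k (a+1)_k (d)_k k!) = Σ_{k=0}^∞ (x/4)^{2k} H_{2k}(x/2) / ((a+1/2)_k k!) + ((1 − a/d)/(a+1/2)) · Σ_{k=0}^∞ (x/4)^{2k+1} H_{2k+1}(x/2) / ((a+3/2)_k k!). -/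
/-- The Pochhammer symbol `(a)_k = a (a+1) ⋯ (a+k-1)`. -/
noncomputable def poch (a : ℂ) (k : ℕ) : ℂ := Polynomial.eval a (ascPochhammer ℂ k)

/-- The physicists' Hermite polynomial `H_n(t) = (-1)^n e^{t²} (d/dt)^n e^{-t²}`. -/
noncomputable def physHermite (n : ℕ) (t : ℝ) : ℝ :=
  (-1 : ℝ) ^ n * Real.exp (t ^ 2) * iteratedDeriv n (fun s => Real.exp (-(s ^ 2))) t

/-!
For positive `a`, the numbers `(a)_n / (2a)_n` are the moments of the normalised Beta weight
`(t (1 - t)) ^ (a - 1)` on `[0, 1]`. In the variable `u = 2t - 1` this weight is even, so its odd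
moments vanish. At `s = x / 2`, `z = -(x / 2) u`, the Hermite generating function
`∑ H_n(s) z ^ n / n! = exp (2 s z - z ^ 2)` has exponent `x ^ 2 / 4 - x ^ 2 t ^ 2`. Integrate it
term by term against the weight multiplied by `1 + (a / d - 1) u`: the powers `t ^ (2k)` give the
coefficients of the hypergeometric series on the left, the even powers of `u` give the first
Hermite sum, and the odd powers give the second one.

For general complex `a` the integrals diverge. The ratios `(a + n) / (2a + n)` of consecutive
moments are still bounded, so `t` can be replaced by a weighted shift operator `T` and integration
by a continuous linear functional on operators. The generating function holds in every Banach
algebra, and the moments of `2T - 1` follow from the Pearson equation of the weight, which is an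
algebraic consequence of the recurrence for the moments of `T`.
-/

section PowerSeriesEvaluation

open PowerSeries
open scoped Nat

variable {𝕜 A : Type*} [NormedField 𝕜] [NormedRing A] [NormedAlgebra 𝕜 A]

theorem hasSum_coeff_mul_smul_pow [CompleteSpace A] {p q : 𝕜⟦X⟧} {z u v : A}
    (hp : HasSum (fun n => coeff n p • z ^ n) u) (hp' : Summable fun n => ‖coeff n p • z ^ n‖)
    (hq : HasSum (fun n => coeff n q • z ^ n) v) (hq' : Summable fun n => ‖coeff n q • z ^ n‖) :
    HasSum (fun n => coeff n (p * q) • z ^ n) (u * v) := by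
  have hcoeff (n : ℕ) : ∑ ij ∈ Finset.HasAntidiagonal.antidiagonal n,
      (coeff ij.1 p • z ^ ij.1) * (coeff ij.2 q • z ^ ij.2) = coeff n (p * q) • z ^ n := by
    rw [coeff_mul, Finset.sum_smul]
    refine Finset.sum_congr rfl fun ij hij => ?_
    rw [smul_mul_smul_comm, ← pow_add, Finset.HasAntidiagonal.mem_antidiagonal.mp hij]
  rw [← hp.tsum_eq, ← hq.tsum_eq, tsum_mul_tsum_eq_tsum_sum_antidiagonal_of_summable_norm hp' hq']
  simpa only [hcoeff] using
    (summable_norm_sum_mul_antidiagonal_of_summable_norm hp' hq').of_norm.hasSum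

theorem coeff_expand_smul_pow_mul (k : ℕ) (hk : k ≠ 0) (p : 𝕜⟦X⟧) (z : A) (n : ℕ) :
    coeff (k * n) (expand k hk p) • z ^ (k * n) = coeff n p • (z ^ k) ^ n := by
  rw [coeff_expand_mul, pow_mul]

theorem coeff_expand_smul_pow_of_notMem_range (k : ℕ) (hk : k ≠ 0) (p : 𝕜⟦X⟧) (z : A) (n : ℕ)
    (hn : n ∉ Set.range (k * ·)) : coeff n (expand k hk p) • z ^ n = 0 := by
  rw [coeff_expand_of_not_dvd _ hk _ fun ⟨m, hm⟩ => hn ⟨m, hm.symm⟩, zero_smul]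

theorem hasSum_coeff_expand_smul_pow {k : ℕ} (hk : k ≠ 0) {p : 𝕜⟦X⟧} {z u : A} :
    HasSum (fun n => coeff n (expand k hk p) • z ^ n) u ↔
      HasSum (fun n => coeff n p • (z ^ k) ^ n) u := by
  rw [← (mul_right_injective₀ hk).hasSum_iff (coeff_expand_smul_pow_of_notMem_range k hk p z)]
  simp only [Function.comp_def, coeff_expand_smul_pow_mul]

theorem summable_norm_coeff_expand_smul_pow {k : ℕ} (hk : k ≠ 0) {p : 𝕜⟦X⟧} {z : A} :
    (Summable fun n => ‖coeff n (expand k hk p) • z ^ n‖) ↔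
      Summable fun n => ‖coeff n p • (z ^ k) ^ n‖ := by
  rw [← (mul_right_injective₀ hk).summable_iff fun n hn =>
    norm_eq_zero.mpr (coeff_expand_smul_pow_of_notMem_range k hk p z n hn)]
  simp only [Function.comp_def, coeff_expand_smul_pow_mul]

end PowerSeriesEvaluation

section HermiteGeneratingFunction

open PowerSeries
open scoped Nat

section

variable {A : Type*} [NormedRing A] [NormedAlgebra ℝ A]

theorem coeff_rescale_exp_smul_pow (r : ℝ) (z : A) (n : ℕ) :
    coeff n (rescale r (exp ℝ)) • z ^ n = (n ! : ℝ)⁻¹ • (r • z) ^ n := by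
  rw [coeff_rescale, coeff_exp, smul_pow, smul_smul]
  simp [mul_comm]

theorem summable_norm_coeff_rescale_exp_smul_pow (r : ℝ) (z : A) :
    Summable fun n => ‖coeff n (rescale r (exp ℝ)) • z ^ n‖ := by
  simpa only [coeff_rescale_exp_smul_pow] using
    NormedSpace.norm_expSeries_summable' (𝕂 := ℝ) (r • z)

theorem hasSum_coeff_rescale_exp_smul_pow [CompleteSpace A] (r : ℝ) (z : A) :
    HasSum (fun n => coeff n (rescale r (exp ℝ)) • z ^ n) (NormedSpace.exp (r • z)) := by
  simpa only [coeff_rescale_exp_smul_pow] using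
    NormedSpace.exp_series_hasSum_exp' (𝕂 := ℝ) (r • z)

end

/-- The formal power series `exp (2 t X - X ^ 2)`, which generates the Hermite polynomials at `t`;
it is written as a product so that it needs no substitution of power series. -/
noncomputable def hermiteSeries (t : ℝ) : ℝ⟦X⟧ :=
  rescale (2 * t) (exp ℝ) * expand 2 two_ne_zero (rescale (-1) (exp ℝ))

theorem hasSum_coeff_hermiteSeries_smul_pow {A : Type*} [NormedRing A] [NormedAlgebra ℝ A]
    [CompleteSpace A] (t : ℝ) (z : A) :
    HasSum (fun n => coeff n (hermiteSeries t) • z ^ n)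
      (NormedSpace.exp ((2 * t) • z - z ^ 2)) := by
  have hcomm : Commute ((2 * t) • z) ((-1 : ℝ) • z ^ 2) :=
    (((Commute.refl z).pow_right 2).smul_left _).smul_right _
  let +nondep : NormedAlgebra ℚ A := .restrictScalars ℚ ℝ A
  rw [sub_eq_add_neg, ← neg_one_smul ℝ (z ^ 2), NormedSpace.exp_add_of_commute hcomm]
  exact hasSum_coeff_mul_smul_pow (hasSum_coeff_rescale_exp_smul_pow _ z)
    (summable_norm_coeff_rescale_exp_smul_pow _ z)
    ((hasSum_coeff_expand_smul_pow _).mpr (hasSum_coeff_rescale_exp_smul_pow _ _))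
    ((summable_norm_coeff_expand_smul_pow _).mpr (summable_norm_coeff_rescale_exp_smul_pow _ _))

theorem eq_iteratedDeriv_div_factorial_of_hasSum {𝕜 : Type*} [NontriviallyNormedField 𝕜]
    [CompleteSpace 𝕜] [CharZero 𝕜] {c : ℕ → 𝕜} {f : 𝕜 → 𝕜}
    (h : ∀ w, HasSum (fun n => c n • w ^ n) (f w)) (n : ℕ) :
    c n = iteratedDeriv n f 0 / n ! := by
  have hc : HasFPowerSeriesAt f (FormalMultilinearSeries.ofScalars 𝕜 c) 0 := by
    refine hasFPowerSeriesAt_iff.mpr (.of_forall fun w => ?_)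
    simpa [mul_comm] using h w
  have heq := hc.eq_formalMultilinearSeries hc.analyticAt.hasFPowerSeriesAt
  simpa using congrArg (·.coeff n) heq

theorem iteratedDeriv_exp_two_mul_sub_sq (n : ℕ) (t : ℝ) :
    iteratedDeriv n (fun w => Real.exp (2 * t * w - w ^ 2)) 0 = physHermite n t := by
  have hshift : (fun w => Real.exp (2 * t * w - w ^ 2)) =
      fun w => Real.exp (t ^ 2) * Real.exp (-(t - w) ^ 2) := by
    funext w
    rw [← Real.exp_add]
    ring_nf
  rw [hshift, iteratedDeriv_const_mul_field,
    iteratedDeriv_comp_const_sub n (fun s => Real.exp (-s ^ 2)) t, physHermite]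
  simp [mul_left_comm, mul_assoc]

theorem coeff_hermiteSeries (n : ℕ) (t : ℝ) :
    coeff n (hermiteSeries t) = physHermite n t / n ! := by
  rw [← iteratedDeriv_exp_two_mul_sub_sq]
  refine eq_iteratedDeriv_div_factorial_of_hasSum (c := fun n => coeff n (hermiteSeries t))
    (fun w => ?_) n
  simpa [Real.exp_eq_exp_ℝ] using hasSum_coeff_hermiteSeries_smul_pow t w

theorem hasSum_physHermite_div_factorial_smul_pow {A : Type*} [NormedRing A] [NormedAlgebra ℝ A]
    [CompleteSpace A] (t : ℝ) (z : A) :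
    HasSum (fun n => (physHermite n t / n !) • z ^ n)
      (NormedSpace.exp ((2 * t) • z - z ^ 2)) := by
  simpa only [coeff_hermiteSeries] using hasSum_coeff_hermiteSeries_smul_pow t z

end HermiteGeneratingFunction

section MomentTransform

open scoped Nat

theorem two_mul_smul_sub_sq_eq {A : Type*} [Ring A] [Algebra ℝ A] (x : ℝ) (T : A) :
    (2 * (x / 2)) • ((-x / 2) • (2 * T - 1)) - ((-x / 2) • (2 * T - 1)) ^ 2 =
      algebraMap ℝ A (x ^ 2 / 4) + (-x ^ 2) • T ^ 2 := by
  have hsq : (2 * T - 1) ^ 2 = (4 : ℝ) • T ^ 2 - (4 : ℝ) • T + 1 := by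
    simp only [ofNat_smul_eq_nsmul]
    noncomm_ring
  have htwo : 2 * T = (2 : ℝ) • T := by rw [ofNat_smul_eq_nsmul, two_nsmul, two_mul]
  rw [smul_pow, hsq, htwo, Algebra.algebraMap_eq_smul_one]
  module

variable {A : Type*} [NormedRing A] [NormedAlgebra ℂ A] [CompleteSpace A]

theorem hasSum_physHermite_mul_apply_pow (f : A →L[ℂ] ℂ) (T : A) (x : ℝ) :
    HasSum (fun n => (((-x / 2) ^ n * physHermite n (x / 2) / n ! : ℝ) : ℂ) *
        f ((2 * T - 1) ^ n))
      (Complex.exp ((x : ℂ) ^ 2 / 4) *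
        ∑' k : ℕ, f (T ^ (2 * k)) * (-(x : ℂ) ^ 2) ^ k / (k ! : ℂ)) := by
  let +nondep : NormedAlgebra ℚ A := .restrictScalars ℚ ℝ A
  have hsplit : NormedSpace.exp (algebraMap ℝ A (x ^ 2 / 4) + (-x ^ 2) • T ^ 2) =
      Real.exp (x ^ 2 / 4) • NormedSpace.exp ((-x ^ 2) • T ^ 2) := by
    rw [NormedSpace.exp_add_of_commute (Algebra.commutes _ _), ← NormedSpace.algebraMap_exp_comm,
      ← Real.exp_eq_exp_ℝ, Algebra.smul_def (Real.exp _)]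
  have hright : f (NormedSpace.exp ((-x ^ 2) • T ^ 2)) =
      ∑' k : ℕ, f (T ^ (2 * k)) * (-(x : ℂ) ^ 2) ^ k / (k ! : ℂ) := by
    refine ((NormedSpace.exp_series_hasSum_exp' (𝕂 := ℝ) ((-x ^ 2) • T ^ 2)).mapL
      (f.restrictScalars ℝ)).tsum_eq.symm.trans (tsum_congr fun k => ?_)
    rw [smul_pow, ← pow_mul, smul_smul, map_smul, Complex.real_smul]
    push_cast
    rw [ContinuousLinearMap.coe_restrictScalars']
    ring
  have hleft := (hasSum_physHermite_div_factorial_smul_pow (x / 2)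
    ((-x / 2) • (2 * T - 1))).mapL (f.restrictScalars ℝ)
  rw [two_mul_smul_sub_sq_eq, hsplit] at hleft
  convert hleft using 1
  · funext n
    rw [smul_pow, smul_smul, map_smul, Complex.real_smul, div_mul_eq_mul_div, mul_comm (_ ^ n)]
    rfl
  · rw [map_smul, Complex.real_smul, ContinuousLinearMap.coe_restrictScalars', hright]
    push_cast
    rfl

end MomentTransform

section WeightedShift

open scoped BoundedContinuousFunction

universe u

variable {𝕜 : Type u} [NontriviallyNormedField 𝕜]

/-- The weighted backward shift `f ↦ (j ↦ w j * f (j + 1))` on bounded sequences. It serves to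
realise a moment sequence with bounded consecutive ratios `w` by the powers of one operator. -/
noncomputable def weightedShift (w : ℕ →ᵇ 𝕜) : (ℕ →ᵇ 𝕜) →L[𝕜] (ℕ →ᵇ 𝕜) :=
  ContinuousLinearMap.mul 𝕜 (ℕ →ᵇ 𝕜) w ∘L
    BoundedContinuousFunction.compContinuousCLM 𝕜 𝕜 ⟨Nat.succ, continuous_of_discreteTopology⟩

theorem weightedShift_apply (w f : ℕ →ᵇ 𝕜) (j : ℕ) :
    weightedShift w f j = w j * f (j + 1) := rfl

theorem weightedShift_pow_one_apply (w : ℕ →ᵇ 𝕜) (n j : ℕ) :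
    (weightedShift w ^ n) 1 j = ∏ i ∈ Finset.range n, w (j + i) := by
  induction n generalizing j with
  | zero => simp
  | succ n ih =>
    rw [pow_succ', mul_apply_eq_comp, weightedShift_apply, ih, Finset.prod_range_succ',
      mul_comm]
    simp only [add_zero, add_assoc, add_comm 1]

theorem exists_apply_pow_eq_prod_range [CompleteSpace 𝕜] (w : ℕ →ᵇ 𝕜) :
    ∃ (A : Type u) (_ : NormedRing A) (_ : NormedAlgebra 𝕜 A) (_ : CompleteSpace A)
      (f : A →L[𝕜] 𝕜) (T : A), ∀ n, f (T ^ n) = ∏ i ∈ Finset.range n, w i :=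
  ⟨(ℕ →ᵇ 𝕜) →L[𝕜] (ℕ →ᵇ 𝕜), inferInstance, inferInstance, inferInstance,
    BoundedContinuousFunction.evalCLM 𝕜 0 ∘L ContinuousLinearMap.apply 𝕜 (ℕ →ᵇ 𝕜) 1,
    weightedShift w, fun n => by simpa using weightedShift_pow_one_apply w n 0⟩

end WeightedShift

section Pochhammer

open scoped Nat

theorem poch_zero (a : ℂ) : poch a 0 = 1 := by simp [poch]

theorem poch_succ (a : ℂ) (k : ℕ) : poch a (k + 1) = poch a k * (a + k) :=
  ascPochhammer_succ_eval k a

theorem poch_eq_prod_range (a : ℂ) (k : ℕ) : poch a k = ∏ i ∈ Finset.range k, (a + i) := by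
  induction k with
  | zero => simp [poch_zero]
  | succ k ih => rw [poch_succ, ih, Finset.prod_range_succ]

theorem poch_succ_left (a : ℂ) (k : ℕ) : poch a (k + 1) = a * poch (a + 1) k := by
  simp [poch, ascPochhammer_succ_left]

theorem poch_two_mul (a : ℂ) (k : ℕ) :
    poch a (2 * k) = 4 ^ k * poch (a / 2) k * poch ((a + 1) / 2) k := by
  induction k with
  | zero => simp [poch_zero]
  | succ k ih =>
    rw [mul_add_one, poch_succ, poch_succ, poch_succ, poch_succ, ih]
    push_cast
    ring

theorem poch_ne_zero {a : ℂ} (ha : ∀ n : ℕ, a ≠ -n) (k : ℕ) : poch a k ≠ 0 := by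
  rw [poch, Ne, ascPochhammer_eval_eq_zero_iff]
  rintro ⟨n, -, hn⟩
  exact ha n (by rw [hn, neg_neg])

theorem exists_apply_pow_eq_poch_div_poch (b c : ℂ) :
    ∃ (A : Type) (_ : NormedRing A) (_ : NormedAlgebra ℂ A) (_ : CompleteSpace A)
      (f : A →L[ℂ] ℂ) (T : A), ∀ n, f (T ^ n) = poch b n / poch c n := by
  have hlim := tendsto_add_mul_div_add_mul_atTop_nhds b c (1 : ℂ) one_ne_zero
  obtain ⟨R, hR⟩ := (Metric.isBounded_range_of_tendsto _ hlim).exists_norm_le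
  simpa [poch_eq_prod_range, Finset.prod_div_distrib] using exists_apply_pow_eq_prod_range
    (BoundedContinuousFunction.ofNormedAddCommGroupDiscrete (fun j : ℕ => (b + j) / (c + j)) R
      fun j => by simpa using hR _ ⟨j, rfl⟩)

/-- The `2k`-th moment `(1/2)_k / (c)_k` of the normalised ultraspherical weight
`(1 - u ^ 2) ^ (c - 3 / 2)` on `[-1, 1]`, with `(1/2)_k` written as `(2k)! / (4 ^ k k!)` to match
the factorials in the Hermite generating function. -/
noncomputable def ultrasphericalMoment (c : ℂ) (k : ℕ) : ℂ :=
  (2 * k)! / (4 ^ k * k ! * poch c k)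

theorem ultrasphericalMoment_zero (c : ℂ) : ultrasphericalMoment c 0 = 1 := by
  simp [ultrasphericalMoment, poch_zero]

theorem ultrasphericalMoment_succ (c : ℂ) (k : ℕ) :
    ultrasphericalMoment c (k + 1) = (2 * k + 1) / (2 * (c + k)) * ultrasphericalMoment c k := by
  have hk : (k : ℂ) + 1 ≠ 0 := Nat.cast_add_one_ne_zero k
  rw [ultrasphericalMoment, ultrasphericalMoment, poch_succ, mul_add_one, Nat.factorial_succ k,
    Nat.factorial_succ (2 * k + 1), Nat.factorial_succ (2 * k)]
  push_cast
  field_simp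
  ring

end Pochhammer

section PearsonEquation

open Polynomial

section

variable {R : Type*} [CommRing R] {L : R[X] →ₗ[R] R} {b c : R}

-- For `L` integration against the Beta weight `w = t ^ (b - 1) (1 - t) ^ (c - b - 1)` on `[0, 1]`,
-- this is the vanishing integral of the derivative of `(t ^ 2 - t) w p`.
theorem map_pearson_eq_zero (hL : ∀ n : ℕ, (c + n) * L (X ^ (n + 1)) = (b + n) * L (X ^ n))
    (p : R[X]) : L ((C c * X - C b) * p + (X ^ 2 - X) * derivative p) = 0 := by
  induction p using Polynomial.induction_on' with
  | add p q hp hq =>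
    rw [derivative_add, mul_add, mul_add, add_add_add_comm, map_add, hp, hq, add_zero]
  | monomial n r =>
    have hmonomial : (C c * X - C b) * monomial n r + (X ^ 2 - X) * derivative (monomial n r) =
        (r * (c + n)) • X ^ (n + 1) - (r * (b + n)) • X ^ n := by
      rw [← C_mul_X_pow_eq_monomial, derivative_C_mul_X_pow]
      simp only [smul_eq_C_mul, map_mul, map_add, map_natCast]
      rcases n with _ | n
      · rw [Nat.cast_zero]
        ring
      · rw [Nat.add_sub_cancel]
        push_cast
        ring
    rw [hmonomial, map_sub, map_smul, map_smul, smul_eq_mul, smul_eq_mul, mul_assoc, hL]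
    ring

variable (hL : ∀ n : ℕ, (2 * b + n) * L (X ^ (n + 1)) = (b + n) * L (X ^ n))

include hL

theorem mul_map_two_mul_X_sub_one_eq_zero : b * L (2 * X - 1) = 0 := by
  rw [← smul_eq_mul, ← map_smul, ← map_pearson_eq_zero hL 1]
  simp only [smul_eq_C_mul, derivative_one, C_mul, map_ofNat]
  ring_nf

theorem mul_map_two_mul_X_sub_one_pow_add_two (n : ℕ) :
    (2 * b + n + 1) * L ((2 * X - 1) ^ (n + 2)) = (n + 1) * L ((2 * X - 1) ^ n) := by
  have hpearson := map_pearson_eq_zero hL ((2 * X - 1) ^ (n + 1))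
  have hpoly : 2 * ((C (2 * b) * X - C b) * (2 * X - 1) ^ (n + 1) +
      (X ^ 2 - X) * derivative ((2 * X - 1) ^ (n + 1))) =
      (2 * b + n + 1 : R) • (2 * X - 1) ^ (n + 2) - (n + 1 : R) • (2 * X - 1) ^ n := by
    simp only [smul_eq_C_mul, derivative_pow, derivative_sub, derivative_mul, derivative_ofNat,
      derivative_X, derivative_one, C_mul, C_add, C_1, map_ofNat, map_natCast]
    push_cast
    ring_nf
  rw [← sub_eq_zero]
  simpa only [two_mul (_ + _), map_add, hpearson, add_zero, map_sub, map_smul, smul_eq_mul]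
    using (congrArg L hpoly).symm

end

section

variable {K : Type*} [Field K] {L : K[X] →ₗ[K] K} {b : K} (hb : ∀ n : ℕ, 2 * b ≠ -n)
  (hL : ∀ n : ℕ, (2 * b + n) * L (X ^ (n + 1)) = (b + n) * L (X ^ n))

include hb hL

theorem map_two_mul_X_sub_one_pow_add_two (n : ℕ) :
    L ((2 * X - 1) ^ (n + 2)) = (n + 1) / (2 * b + n + 1) * L ((2 * X - 1) ^ n) := by
  have hne : 2 * b + n + 1 ≠ 0 := by
    simpa [add_assoc, add_eq_zero_iff_eq_neg] using hb (n + 1)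
  rw [div_mul_eq_mul_div, eq_div_iff hne, mul_comm, mul_map_two_mul_X_sub_one_pow_add_two hL]

theorem map_two_mul_X_sub_one_pow_two_mul_add_one (k : ℕ) :
    L ((2 * X - 1) ^ (2 * k + 1)) = 0 := by
  induction k with
  | zero =>
    have hb0 : b ≠ 0 := right_ne_zero_of_mul (by simpa using hb 0 : 2 * b ≠ 0)
    simpa [hb0] using mul_map_two_mul_X_sub_one_eq_zero hL
  | succ k ih =>
    rw [mul_add_one, add_right_comm, map_two_mul_X_sub_one_pow_add_two hb hL, ih, mul_zero]

end

theorem map_two_mul_X_sub_one_pow_two_mul {L : ℂ[X] →ₗ[ℂ] ℂ} {a : ℂ} (ha : ∀ n : ℕ, 2 * a ≠ -n)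
    (hL : ∀ n : ℕ, (2 * a + n) * L (X ^ (n + 1)) = (a + n) * L (X ^ n)) (k : ℕ) :
    L ((2 * X - 1) ^ (2 * k)) = ultrasphericalMoment (a + 1 / 2) k * L 1 := by
  induction k with
  | zero => simp [ultrasphericalMoment_zero]
  | succ k ih =>
    rw [mul_add_one, map_two_mul_X_sub_one_pow_add_two ha hL, ih, ultrasphericalMoment_succ]
    push_cast
    ring

end PearsonEquation

section MomentRealization

theorem poch_div_poch_two_mul_add_eq {a d : ℂ} (ha : ∀ n : ℕ, 2 * a ≠ -n) (n : ℕ) :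
    poch a n / poch (2 * a) n + (a / d - 1) *
        (2 * (poch a (n + 1) / poch (2 * a) (n + 1)) - poch a n / poch (2 * a) n) =
      poch a n / poch (2 * a + 1) n * (1 + n / (2 * d)) := by
  have hn : 2 * a + n ≠ 0 := by simpa [add_eq_zero_iff_eq_neg] using ha n
  have ha0 : 2 * a ≠ 0 := by simpa using ha 0
  have hshift : poch (2 * a + 1) n = poch (2 * a) n * (2 * a + n) / (2 * a) := by
    rw [eq_div_iff ha0, mul_comm, ← poch_succ_left, poch_succ]
  have hne := poch_ne_zero ha n
  rw [hshift, poch_succ, poch_succ]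
  field_simp
  ring

theorem poch_two_mul_div_poch_mul_eq {a d : ℂ} (hd : ∀ n : ℕ, d ≠ -n) (k : ℕ) :
    poch a (2 * k) / poch (2 * a + 1) (2 * k) * (1 + (2 * k : ℕ) / (2 * d)) =
      poch (a / 2) k * poch ((a + 1) / 2) k * poch (d + 1) k /
        (poch (a + 1 / 2) k * poch (a + 1) k * poch d k) := by
  have hd0 : d ≠ 0 := by simpa using hd 0
  have hdk := poch_ne_zero hd k
  have h4 : (4 : ℂ) ^ k ≠ 0 := pow_ne_zero k (by norm_num)
  have hratio : (1 + (2 * k : ℕ) / (2 * d)) = poch (d + 1) k / poch d k := by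
    rw [eq_div_iff hdk, ← mul_right_inj' hd0, ← poch_succ_left, poch_succ]
    push_cast
    field_simp
  rw [hratio, poch_two_mul, poch_two_mul, show (2 * a + 1) / 2 = a + 1 / 2 by ring,
    show (2 * a + 1 + 1) / 2 = a + 1 by ring, mul_assoc, mul_assoc,
    mul_div_mul_left _ _ h4, div_mul_div_comm]

section

variable {A : Type*} [Ring A] [Algebra ℂ A] {f : A →ₗ[ℂ] ℂ} {T : A} {a : ℂ}
  (ha : ∀ n : ℕ, 2 * a ≠ -n) (hf : ∀ n, f (T ^ n) = poch a n / poch (2 * a) n)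

include ha hf

theorem mul_map_aeval_X_pow_succ (n : ℕ) :
    (2 * a + n) * (f ∘ₗ (Polynomial.aeval T).toLinearMap) (Polynomial.X ^ (n + 1)) =
      (a + n) * (f ∘ₗ (Polynomial.aeval T).toLinearMap) (Polynomial.X ^ n) := by
  have hn : 2 * a + n ≠ 0 := by simpa [add_eq_zero_iff_eq_neg] using ha n
  have hne := poch_ne_zero ha n
  simp only [LinearMap.comp_apply, AlgHom.toLinearMap_apply, map_pow, Polynomial.aeval_X, hf,
    poch_succ]
  field_simp

theorem map_two_mul_sub_one_pow_two_mul (k : ℕ) :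
    f ((2 * T - 1) ^ (2 * k)) = ultrasphericalMoment (a + 1 / 2) k := by
  have hone : f 1 = 1 := by simpa [poch_zero] using hf 0
  simpa [hone, map_ofNat] using
    map_two_mul_X_sub_one_pow_two_mul ha (mul_map_aeval_X_pow_succ ha hf) k

theorem map_two_mul_sub_one_pow_two_mul_add_one (k : ℕ) :
    f ((2 * T - 1) ^ (2 * k + 1)) = 0 := by
  simpa [map_ofNat] using
    map_two_mul_X_sub_one_pow_two_mul_add_one ha (mul_map_aeval_X_pow_succ ha hf) k

end

theorem exists_map_pow_eq_hypergeometric {A : Type*} [NormedRing A] [NormedAlgebra ℂ A]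
    {f : A →L[ℂ] ℂ} {T : A} {a d : ℂ} (ha : ∀ n : ℕ, 2 * a ≠ -n) (hd : ∀ n : ℕ, d ≠ -n)
    (hf : ∀ n, f (T ^ n) = poch a n / poch (2 * a) n) :
    ∃ g : A →L[ℂ] ℂ,
      (∀ k, g (T ^ (2 * k)) = poch (a / 2) k * poch ((a + 1) / 2) k * poch (d + 1) k /
        (poch (a + 1 / 2) k * poch (a + 1) k * poch d k)) ∧
      (∀ k, g ((2 * T - 1) ^ (2 * k)) = ultrasphericalMoment (a + 1 / 2) k) ∧
      ∀ k, g ((2 * T - 1) ^ (2 * k + 1)) =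
        (a / d - 1) * ultrasphericalMoment (a + 1 / 2) (k + 1) := by
  have heven := map_two_mul_sub_one_pow_two_mul (f := f.toLinearMap) ha hf
  have hodd := map_two_mul_sub_one_pow_two_mul_add_one (f := f.toLinearMap) ha hf
  simp only [ContinuousLinearMap.coe_coe] at heven hodd
  let g := f ∘L ContinuousLinearMap.mul ℂ A (1 + (a / d - 1) • (2 * T - 1))
  have hg (S : A) : g S = f S + (a / d - 1) * f ((2 * T - 1) * S) := by
    change f ((1 + (a / d - 1) • (2 * T - 1)) * S) = _
    rw [add_mul, one_mul, smul_mul_assoc, map_add, map_smul, smul_eq_mul]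
  refine ⟨g, fun k => ?_, fun k => ?_, fun k => ?_⟩
  · have hT : (2 * T - 1) * T ^ (2 * k) = (2 : ℂ) • T ^ (2 * k + 1) - T ^ (2 * k) := by
      rw [sub_mul, one_mul, mul_assoc, ← pow_succ', ofNat_smul_eq_nsmul, two_nsmul, two_mul]
    rw [hg, hT, map_sub, map_smul, smul_eq_mul, hf, hf,
      poch_div_poch_two_mul_add_eq ha, poch_two_mul_div_poch_mul_eq hd]
  · rw [hg, ← pow_succ', heven, hodd, mul_zero, add_zero]
  · rw [hg, ← pow_succ', hodd, zero_add, ← heven, mul_add_one]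

end MomentRealization

section EvenOddTerms

open scoped Nat

theorem tsum_even_add_odd_of_hasSum {E : Type*} [NormedAddCommGroup E] [CompleteSpace E]
    {f : ℕ → E} {s : E} (hf : HasSum f s) : ∑' k, f (2 * k) + ∑' k, f (2 * k + 1) = s := by
  rw [← hf.tsum_eq]
  exact tsum_even_add_odd
    (hf.summable.comp_injective (mul_right_injective₀ two_ne_zero))
    (hf.summable.comp_injective
      ((add_left_injective 1).comp (mul_right_injective₀ two_ne_zero)))

theorem neg_half_pow_div_factorial_mul_ultrasphericalMoment (x y : ℝ) (c : ℂ) (k : ℕ) :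
    (((-x / 2) ^ (2 * k) * y / (2 * k)! : ℝ) : ℂ) * ultrasphericalMoment c k =
      ((x / 4) ^ (2 * k) * y : ℝ) / (poch c k * k !) := by
  have hpow : (-x / 2) ^ (2 * k) = 4 ^ k * (x / 4) ^ (2 * k) := by
    rw [pow_mul, pow_mul, ← mul_pow]
    ring
  have hfact : ((2 * k)! : ℂ) ≠ 0 := Nat.cast_ne_zero.mpr (Nat.factorial_ne_zero _)
  rw [hpow, ultrasphericalMoment]
  push_cast
  field_simp

theorem neg_half_pow_div_factorial_mul_ultrasphericalMoment_succ (x y : ℝ) (c : ℂ) (k : ℕ) :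
    (((-x / 2) ^ (2 * k + 1) * y / (2 * k + 1)! : ℝ) : ℂ) * ultrasphericalMoment c (k + 1) =
      -c⁻¹ * (((x / 4) ^ (2 * k + 1) * y : ℝ) / (poch (c + 1) k * k !)) := by
  have hpow : (-x / 2) ^ (2 * k + 1) = -2 * 4 ^ k * (x / 4) ^ (2 * k + 1) := by
    rw [pow_succ, pow_succ, pow_mul, pow_mul, mul_assoc, ← mul_assoc (4 ^ k), ← mul_pow]
    ring
  have hfact : ((2 * k + 1)! : ℂ) ≠ 0 := Nat.cast_ne_zero.mpr (Nat.factorial_ne_zero _)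
  have hk : (k : ℂ) + 1 ≠ 0 := Nat.cast_add_one_ne_zero k
  rw [hpow, ultrasphericalMoment, poch_succ_left, mul_add_one, Nat.factorial_succ (2 * k + 1),
    Nat.factorial_succ k]
  push_cast
  field_simp
  ring

end EvenOddTerms

theorem two_mul_ne_neg_natCast {a : ℂ} (ha0 : a ≠ 0) (ha1 : ∀ n : ℕ, a + 1 / 2 ≠ -(n : ℂ))
    (hap1 : ∀ n : ℕ, a + 1 ≠ -(n : ℂ)) (n : ℕ) : 2 * a ≠ -n := by
  intro h
  obtain ⟨m, rfl | rfl⟩ := n.even_or_odd'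
  · cases m with
    | zero => exact ha0 (by simpa using h)
    | succ m => exact hap1 m (by push_cast at h; linear_combination h / 2)
  · exact ha1 m (by push_cast at h; linear_combination h / 2)

/-- Example (d) of the paper:
`e^{x²/4} ₃F₃(a/2, (a+1)/2, d+1; a+1/2, a+1, d; -x²)
  = Σ_k (x/4)^{2k} H_{2k}(x/2)/((a+1/2)_k k!)
    + ((1-a/d)/(a+1/2)) Σ_k (x/4)^{2k+1} H_{2k+1}(x/2)/((a+3/2)_k k!)`. -/
theorem example_hermite
    (x : ℝ) (a d : ℂ)
    (hd0 : d ≠ 0)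
    (ha120 : a + 1 / 2 ≠ 0)
    (ha2 : ∀ n : ℕ, a / 2 ≠ -(n : ℂ))
    (ha12n : ∀ n : ℕ, (a + 1) / 2 ≠ -(n : ℂ))
    (ha1 : ∀ n : ℕ, a + 1 / 2 ≠ -(n : ℂ))
    (hap1 : ∀ n : ℕ, a + 1 ≠ -(n : ℂ))
    (ha3 : ∀ n : ℕ, a + 3 / 2 ≠ -(n : ℂ))
    (hd : ∀ n : ℕ, d ≠ -(n : ℂ)) :
    Complex.exp ((x : ℂ) ^ 2 / 4) *
        ∑' k : ℕ, poch (a / 2) k * poch ((a + 1) / 2) k * poch (d + 1) k *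
          (-(x : ℂ) ^ 2) ^ k /
          (poch (a + 1 / 2) k * poch (a + 1) k * poch d k * (Nat.factorial k : ℂ))
      = (∑' k : ℕ, (((x / 4) ^ (2 * k) * physHermite (2 * k) (x / 2) : ℝ) : ℂ) /
            (poch (a + 1 / 2) k * (Nat.factorial k : ℂ)))
        + ((1 - a / d) / (a + 1 / 2)) *
          ∑' k : ℕ, (((x / 4) ^ (2 * k + 1) * physHermite (2 * k + 1) (x / 2) : ℝ) : ℂ) /
            (poch (a + 3 / 2) k * (Nat.factorial k : ℂ)) := by
  have ha : ∀ n : ℕ, 2 * a ≠ -n :=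
    two_mul_ne_neg_natCast (fun h => ha2 0 (by simp [h])) ha1 hap1
  obtain ⟨A, _, _, _, f, T, hf⟩ := exists_apply_pow_eq_poch_div_poch a (2 * a)
  obtain ⟨g, hg, heven, hodd⟩ := exists_map_pow_eq_hypergeometric ha hd hf
  calc
    _ = Complex.exp ((x : ℂ) ^ 2 / 4) *
        ∑' k : ℕ, g (T ^ (2 * k)) * (-(x : ℂ) ^ 2) ^ k / (Nat.factorial k : ℂ) := by
      simp only [hg, div_mul_eq_mul_div, div_div]
    _ = _ := (tsum_even_add_odd_of_hasSum (hasSum_physHermite_mul_apply_pow g T x)).symm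
    _ = _ := by
      rw [show a + 3 / 2 = a + 1 / 2 + 1 by ring]
      simp only [heven, hodd, mul_left_comm _ (a / d - 1), tsum_mul_left,
        neg_half_pow_div_factorial_mul_ultrasphericalMoment,
        neg_half_pow_div_factorial_mul_ultrasphericalMoment_succ]
      ring
end

section
/- Let m be a positive integer, k a natural number with 0 ≤ k ≤ m, and d a complex number that is not a nonpositive integer or zero. Then ((−1)^k / k!) · Σ_{j=0}^k (−k)_j (d+m)_j / ((d)_j · j!) = binomial(m, k) / (d)_k. -/
/-!
Mathlib's Chu–Vandermonde identity expands the falling factorial of `r + s`. At `r = -b`,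
`s = d + k - 1` it becomes the polynomial identity
`∑ (k choose i) (-1)^i (b)_i (d + i)_{k - i} = (d - b)_k`, and dividing by
`(d)_k = (d)_i (d + i)_{k - i}` evaluates `₂F₁(-k, b; d; 1)` as `(d - b)_k / (d)_k`.
For `b = d + x` the numerator is `(-x)_k = (-1)^k k! (x choose k)`.
-/

open Finset Polynomial

section Ring

variable {R : Type*} [Ring R]

theorem ascPochhammer_eval_neg_eq_smeval_descPochhammer (r : R) (k : ℕ) :
    (ascPochhammer R k).eval (-r) = (-1) ^ k * (descPochhammer ℤ k).smeval r := by
  rw [← ascPochhammer_smeval_eq_eval, ascPochhammer_smeval_neg_eq_descPochhammer]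
  simp [Int.negOnePow_def, Units.smul_def]

theorem descPochhammer_smeval_neg (r : R) (k : ℕ) :
    (descPochhammer ℤ k).smeval (-r) = (-1) ^ k * (ascPochhammer R k).eval r := by
  nth_rw 2 [← neg_neg r]
  rw [ascPochhammer_eval_neg_eq_smeval_descPochhammer, ← mul_assoc, ← pow_add,
    (Even.add_self k).neg_one_pow, one_mul]

theorem descPochhammer_smeval_add_sub_one (r : R) (k : ℕ) :
    (descPochhammer ℤ k).smeval (r + k - 1) = (ascPochhammer R k).eval r := by
  rw [descPochhammer_smeval_eq_ascPochhammer, ascPochhammer_smeval_eq_eval]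
  congr 1
  abel

theorem ascPochhammer_eval_neg_eq_factorial_mul_choose [BinomialRing R] (r : R) (k : ℕ) :
    (ascPochhammer R k).eval (-r) = (-1) ^ k * (k.factorial * Ring.choose r k) := by
  rw [ascPochhammer_eval_neg_eq_smeval_descPochhammer,
    Ring.descPochhammer_eq_factorial_smul_choose, nsmul_eq_mul]

theorem ascPochhammer_eval_sub {b d : R} (h : Commute b d) (k : ℕ) :
    (ascPochhammer R k).eval (d - b) = ∑ ij ∈ antidiagonal k, (k.choose ij.1 : R) *
      ((-1) ^ ij.1 * (ascPochhammer R ij.1).eval b * (ascPochhammer R ij.2).eval (d + ij.1)) := by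
  have hcomm : Commute (-b) (d + k - 1) :=
    ((h.add_right (Nat.commute_cast b k)).sub_right (Commute.one_right b)).neg_left
  rw [← descPochhammer_smeval_add_sub_one, show d - b + k - 1 = -b + (d + k - 1) by abel,
    Ring.descPochhammer_smeval_add k hcomm]
  refine sum_congr rfl fun ⟨i, j⟩ hij => ?_
  obtain rfl : i + j = k := mem_antidiagonal.mp hij
  rw [descPochhammer_smeval_neg, ← descPochhammer_smeval_add_sub_one (d + i) j, add_assoc d,
    Nat.cast_add]

end Ring

theorem ascPochhammer_eval_add {S : Type*} [CommSemiring S] (a : S) (i j : ℕ) :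
    (ascPochhammer S (i + j)).eval a =
      (ascPochhammer S i).eval a * (ascPochhammer S j).eval (a + i) := by
  simp [← ascPochhammer_mul, eval_comp]

section Field

variable {K : Type*} [Field K]

theorem sum_choose_mul_ascPochhammer_eval_div (b : K) {d : K} {k : ℕ}
    (hd : (ascPochhammer K k).eval d ≠ 0) :
    ∑ j ∈ range (k + 1), (k.choose j : K) *
        ((-1) ^ j * (ascPochhammer K j).eval b / (ascPochhammer K j).eval d) =
      (ascPochhammer K k).eval (d - b) / (ascPochhammer K k).eval d := by
  rw [← Nat.sum_antidiagonal_eq_sum_range_succ_mk (fun ij : ℕ × ℕ => (k.choose ij.1 : K) *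
      ((-1) ^ ij.1 * (ascPochhammer K ij.1).eval b / (ascPochhammer K ij.1).eval d)),
    ascPochhammer_eval_sub (Commute.all b d), sum_div]
  refine sum_congr rfl fun ⟨i, j⟩ hij => ?_
  obtain rfl : i + j = k := mem_antidiagonal.mp hij
  rw [ascPochhammer_eval_add] at hd ⊢
  rw [← mul_assoc _ (_ * _), mul_div_mul_right _ _ (right_ne_zero_of_mul hd), ← mul_div_assoc]

variable [CharZero K]

theorem sum_ascPochhammer_eval_neg_natCast_mul_div (b : K) {d : K} {k : ℕ}
    (hd : (ascPochhammer K k).eval d ≠ 0) :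
    ∑ j ∈ range (k + 1), (ascPochhammer K j).eval (-(k : K)) * (ascPochhammer K j).eval b /
        ((ascPochhammer K j).eval d * (j.factorial : K)) =
      (ascPochhammer K k).eval (d - b) / (ascPochhammer K k).eval d := by
  rw [← sum_choose_mul_ascPochhammer_eval_div b hd]
  refine sum_congr rfl fun j _ => ?_
  have hj : (j.factorial : K) ≠ 0 := Nat.cast_ne_zero.mpr j.factorial_ne_zero
  rw [ascPochhammer_eval_neg_eq_factorial_mul_choose, Ring.choose_natCast]
  field_simp

theorem coefficient_C_single_general (x : K) {d : K} {k : ℕ} (hd : ∀ n < k, d ≠ -(n : K)) :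
    ((-1 : K) ^ k / (k.factorial : K)) *
        ∑ j ∈ range (k + 1), (ascPochhammer K j).eval (-(k : K)) *
          (ascPochhammer K j).eval (d + x) / ((ascPochhammer K j).eval d * (j.factorial : K)) =
      Ring.choose x k / (ascPochhammer K k).eval d := by
  have hdk : (ascPochhammer K k).eval d ≠ 0 := by
    rw [Ne, ascPochhammer_eval_eq_zero_iff]
    rintro ⟨n, hn, h⟩
    exact hd n hn (neg_eq_iff_eq_neg.mp h.symm)
  have hk : (k.factorial : K) ≠ 0 := Nat.cast_ne_zero.mpr k.factorial_ne_zero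
  have hsign : (-1 : K) ^ k * (-1) ^ k = 1 := by
    rw [← pow_add, (Even.add_self k).neg_one_pow]
  rw [sum_ascPochhammer_eval_neg_natCast_mul_div _ hdk, sub_add_cancel_left,
    ascPochhammer_eval_neg_eq_factorial_mul_choose]
  field_simp
  linear_combination Ring.choose x k * hsign

end Field

/-- The coefficient `C_{k,1}` in the single-parameter case:
`((-1)^k/k!) ₂F₁(-k, d+m; d; 1) = binom(m,k) / (d)_k`. -/
theorem coefficient_C_single
    (m : ℕ) (hm : 0 < m) (k : ℕ) (hk : k ≤ m)
    (d : ℂ) (hd : ∀ n : ℕ, d ≠ -(n : ℂ)) :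
    ((-1 : ℂ) ^ k / (Nat.factorial k : ℂ)) *
        ∑ j ∈ Finset.range (k + 1), poch (-(k : ℂ)) j * poch (d + (m : ℂ)) j /
          (poch d j * (Nat.factorial j : ℂ))
      = ((Nat.choose m k : ℕ) : ℂ) / poch d k := by
  rw [← Ring.choose_natCast]
  exact coefficient_C_single_general (m : ℂ) fun n _ => hd n
end
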